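/- arXiv:2311.03242 — 4 statements merged into one kernel-verified Lean document; each statement's English description precedes it below -/
import Mathlib

section
/- Let μ be a probability measure on ℝ^d, let a > 0 and r ≥ 0, and suppose that μ({x : ‖x‖ > t}) ≤ exp(−t²/(2a)) for every t ≥ r. Then ∫_{{‖x‖ > r}} ‖x‖² dμ(x) ≤ (2a + r²)·exp(−r²/(2a)). -/
open MeasureTheory Real

/-!
On `{‖x‖ > r}` write `‖x‖² = (‖x‖² - r²) + r²`. The constant part contributes
`r² * μ {‖x‖ > r} ≤ r² * exp (-r² / (2a))`. The layer-cake formula for the nonnegative function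
`‖x‖² - r²` involves the level sets `{‖x‖² - r² > s} = {‖x‖ > √(s + r²)}`, of measure at most
`exp (-r² / (2a)) * exp (-s / (2a))` by the tail hypothesis at `t = √(s + r²) ≥ r`; integrating
over `s > 0` gives `2a * exp (-r² / (2a))`. Working with lower Lebesgue integrals until the last
step means that integrability of `‖x‖²` does not have to be established separately.
-/

lemma lintegral_exp_tail (a : ℝ) (ha : 0 < a) (r : ℝ) :
    ∫⁻ s in Set.Ioi (0 : ℝ), ENNReal.ofReal (Real.exp (-(s + r ^ 2) / (2 * a)))
      = ENNReal.ofReal (2 * a * Real.exp (-r ^ 2 / (2 * a))) := by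
  have hneg : -(1 / (2 * a)) < 0 := by
    have : 0 < 1 / (2 * a) := by positivity
    linarith
  have hfun : (fun s : ℝ => Real.exp (-(s + r ^ 2) / (2 * a)))
      = fun s => Real.exp (-r ^ 2 / (2 * a)) * Real.exp (-(1 / (2 * a)) * s) := by
    funext s
    rw [← Real.exp_add]
    congr 1
    ring
  have hint : IntegrableOn (fun s : ℝ => Real.exp (-(s + r ^ 2) / (2 * a))) (Set.Ioi 0) := by
    rw [hfun]
    exact (integrableOn_exp_mul_Ioi hneg 0).const_mul _
  rw [← ofReal_integral_eq_lintegral_ofReal hint (ae_of_all _ fun s => (Real.exp_pos _).le),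
    hfun, integral_const_mul, integral_exp_mul_Ioi hneg]
  congr 1
  rw [mul_zero, Real.exp_zero]
  field_simp

/-- **layer-cake tail bound.** If a probability measure `μ` on `ℝ^d`
satisfies the Gaussian-type tail bound `μ({‖x‖ > t}) ≤ exp(−t²/(2a))` for all `t ≥ r`,
then `∫_{‖x‖ > r} ‖x‖² dμ ≤ (2a + r²)·exp(−r²/(2a))`. -/
theorem tail_second_moment_bound
    (d : ℕ) (μ : Measure (EuclideanSpace ℝ (Fin d))) [IsProbabilityMeasure μ]
    (a : ℝ) (ha : 0 < a) (r : ℝ) (hr : 0 ≤ r)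
    (htail : ∀ t : ℝ, r ≤ t →
      (μ {x : EuclideanSpace ℝ (Fin d) | t < ‖x‖}).toReal ≤ Real.exp (-t ^ 2 / (2 * a))) :
    ∫ x in {x : EuclideanSpace ℝ (Fin d) | r < ‖x‖}, ‖x‖ ^ 2 ∂μ
      ≤ (2 * a + r ^ 2) * Real.exp (-r ^ 2 / (2 * a)) := by
  have htail' : ∀ t : ℝ, r ≤ t → μ {x : EuclideanSpace ℝ (Fin d) | t < ‖x‖}
      ≤ ENNReal.ofReal (Real.exp (-t ^ 2 / (2 * a))) := fun t ht =>
    (ENNReal.le_ofReal_iff_toReal_le (measure_ne_top _ _) (Real.exp_pos _).le).2 (htail t ht)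
  set S := {x : EuclideanSpace ℝ (Fin d) | r < ‖x‖} with hS
  have hSm : MeasurableSet S := measurableSet_lt measurable_const measurable_norm
  have hnn : ∀ x ∈ S, 0 ≤ ‖x‖ ^ 2 - r ^ 2 := fun x hx =>
    sub_nonneg.2 (pow_le_pow_left₀ hr (le_of_lt hx) 2)
  have hmeas : Measurable fun x : EuclideanSpace ℝ (Fin d) => ‖x‖ ^ 2 - r ^ 2 := by fun_prop
  have hexcess : ∫⁻ x in S, ENNReal.ofReal (‖x‖ ^ 2 - r ^ 2) ∂μ
      ≤ ENNReal.ofReal (2 * a * Real.exp (-r ^ 2 / (2 * a))) := by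
    rw [lintegral_eq_lintegral_meas_lt _ (ae_restrict_of_forall_mem hSm hnn) hmeas.aemeasurable,
      ← lintegral_exp_tail a ha r]
    refine setLIntegral_mono' measurableSet_Ioi fun s hs => ?_
    have hs : 0 < s := hs
    have hsub : {x : EuclideanSpace ℝ (Fin d) | s < ‖x‖ ^ 2 - r ^ 2}
        ⊆ {x | √(s + r ^ 2) < ‖x‖} := by
      intro x (hx : s < ‖x‖ ^ 2 - r ^ 2)
      exact (Real.sqrt_lt (by positivity) (norm_nonneg x)).2 (by linarith)
    calc _ ≤ μ {x | s < ‖x‖ ^ 2 - r ^ 2} := Measure.restrict_apply_le _ _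
      _ ≤ μ {x | √(s + r ^ 2) < ‖x‖} := measure_mono hsub
      _ ≤ _ := htail' _ (Real.le_sqrt_of_sq_le (by linarith))
      _ = _ := by rw [Real.sq_sqrt (by positivity)]
  rw [integral_eq_lintegral_of_nonneg_ae (ae_of_all _ fun x => by positivity)
    (by fun_prop)]
  refine ENNReal.toReal_le_of_le_ofReal (by positivity) ?_
  calc ∫⁻ x in S, ENNReal.ofReal (‖x‖ ^ 2) ∂μ
      = ∫⁻ x in S, (ENNReal.ofReal (‖x‖ ^ 2 - r ^ 2) + ENNReal.ofReal (r ^ 2)) ∂μ := by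
        refine setLIntegral_congr_fun hSm fun x hx => ?_
        rw [← ENNReal.ofReal_add (hnn x hx) (sq_nonneg r), sub_add_cancel]
    _ = ∫⁻ x in S, ENNReal.ofReal (‖x‖ ^ 2 - r ^ 2) ∂μ + ENNReal.ofReal (r ^ 2) * μ S := by
        rw [lintegral_add_right _ measurable_const, setLIntegral_const]
    _ ≤ ENNReal.ofReal (2 * a * Real.exp (-r ^ 2 / (2 * a)))
        + ENNReal.ofReal (r ^ 2) * ENNReal.ofReal (Real.exp (-r ^ 2 / (2 * a))) := by
        gcongr
        exact htail' r le_rfl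
    _ = _ := by
        rw [← ENNReal.ofReal_mul (sq_nonneg r), ← ENNReal.ofReal_add (by positivity)
          (by positivity), add_mul]
end

section
/- Let f : ℝ^d → ℝ^d satisfy ‖f(x)‖ ≤ ‖f(y)‖ + M‖x − y‖ for all x, y ∈ ℝ^d (for instance f = ∇V with ∇V M-Lipschitz). Let d ≥ 1, σ > 0, and let μ be a probability measure on ℝ^d with μ({x : ‖x‖ > t}) ≤ exp(−t²/(2d²σ²)) for all t > 0. Then for every r > 0 and every vector c ∈ ℝ^d: 2·∫_{{‖x‖ > r}} (‖f(x)‖² + ‖c‖²) dμ(x) ≤ [4M²(2d²σ² + r²) + 2(2‖f(0)‖² + ‖c‖²)]·exp(−r²/(2d²σ²)). -/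
/-!
Taking `y = 0` in the growth condition gives `‖f x‖² ≤ 2‖f 0‖² + 2M²‖x‖²`. Put `K = 2d²σ²`. On
`{‖x‖ > r}` write `‖x‖² = r² + g x` with the excess `g x = max (‖x‖² - r²) 0`. The constant part is
bounded by the tail of `μ` at `r`. For the excess, `{g > t} = {‖x‖ > √(t + r²)}`, so the layer cake
formula gives `∫ g ∂μ ≤ ∫_0^∞ exp (-(t + r²) / K) dt = K exp (-r² / K)` (`lintegral_excess_le`).
-/

open MeasureTheory Real

/-- The mean of the excess `max (‖x‖² - r²) 0` under a sub-Gaussian norm tail. The bound on the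
lower integral also provides integrability of the excess. -/
lemma lintegral_excess_le {E : Type*} [NormedAddCommGroup E] [MeasurableSpace E] [BorelSpace E]
    (μ : Measure E) [IsProbabilityMeasure μ] {K r : ℝ} (hK : 0 < K)
    (htail : ∀ t : ℝ, 0 < t → (μ {x : E | t < ‖x‖}).toReal ≤ Real.exp (-t ^ 2 / K)) :
    ∫⁻ x, ENNReal.ofReal (max (‖x‖ ^ 2 - r ^ 2) 0) ∂μ
      ≤ ENNReal.ofReal (K * Real.exp (-r ^ 2 / K)) := by
  have hm : Measurable fun x : E => max (‖x‖ ^ 2 - r ^ 2) 0 := by fun_prop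
  have hnn : 0 ≤ᵐ[μ] fun x : E => max (‖x‖ ^ 2 - r ^ 2) 0 := ae_of_all _ fun x => le_max_right _ _
  rw [lintegral_eq_lintegral_meas_lt μ hnn hm.aemeasurable]
  have hexp : ∀ t : ℝ, Real.exp (-(t + r ^ 2) / K)
      = Real.exp (-r ^ 2 / K) * Real.exp (-(1 / K) * t) := by
    intro t
    rw [← Real.exp_add]
    congr 1
    field_simp
    ring
  have hneg : -(1 / K) < 0 := by
    have : 0 < 1 / K := by positivity
    linarith
  have hint : IntegrableOn (fun t : ℝ => Real.exp (-(t + r ^ 2) / K)) (Set.Ioi 0) := by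
    simp_rw [hexp]
    exact (integrableOn_exp_mul_Ioi hneg 0).const_mul _
  calc ∫⁻ t in Set.Ioi (0 : ℝ), μ {x : E | t < max (‖x‖ ^ 2 - r ^ 2) 0}
      ≤ ∫⁻ t in Set.Ioi (0 : ℝ), ENNReal.ofReal (Real.exp (-(t + r ^ 2) / K)) := by
        refine setLIntegral_mono' measurableSet_Ioi fun t ht => ?_
        have ht : 0 < t := ht
        have hpos : 0 < t + r ^ 2 := by positivity
        have hsub : {x : E | t < max (‖x‖ ^ 2 - r ^ 2) 0} ⊆ {x : E | √(t + r ^ 2) < ‖x‖} := by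
          intro x hx
          have hx : t < max (‖x‖ ^ 2 - r ^ 2) 0 := hx
          rcases lt_max_iff.1 hx with h | h
          · change √(t + r ^ 2) < ‖x‖
            rw [← Real.sqrt_sq (norm_nonneg x)]
            exact Real.sqrt_lt_sqrt hpos.le (by linarith)
          · exact absurd h ht.not_gt
        refine (measure_mono hsub).trans ?_
        rw [← ENNReal.ofReal_toReal (measure_ne_top μ {x : E | √(t + r ^ 2) < ‖x‖})]
        refine ENNReal.ofReal_le_ofReal ((htail _ (Real.sqrt_pos.2 hpos)).trans_eq ?_)
        rw [Real.sq_sqrt hpos.le]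
    _ = ENNReal.ofReal (K * Real.exp (-r ^ 2 / K)) := by
        rw [← ofReal_integral_eq_lintegral_ofReal hint (ae_of_all _ fun t => (Real.exp_pos _).le)]
        simp_rw [hexp]
        rw [integral_const_mul, integral_exp_mul_Ioi hneg 0]
        congr 1
        simp
        ring

/-- Let `f : ℝ^d → ℝ^d` satisfy `‖f(x)‖ ≤ ‖f(y)‖ + M‖x−y‖` for all
`x, y` (e.g. `f = ∇V` with `∇V` `M`-Lipschitz), and let `μ` be a probability measure on
`ℝ^d` with sub-Gaussian norm tail `μ({‖x‖ > t}) ≤ exp(−t²/(2d²σ²))` for all `t > 0`.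
Then for every `r > 0` and every vector `c`,
`2·∫_{‖x‖ > r} (‖f(x)‖² + ‖c‖²) dμ
  ≤ [4M²(2d²σ² + r²) + 2(2‖f(0)‖² + ‖c‖²)]·exp(−r²/(2d²σ²))`. -/
theorem tail_gradient_bound
    (d : ℕ) (hd : 1 ≤ d) (σ : ℝ) (hσ : 0 < σ) (M : ℝ)
    (f : EuclideanSpace ℝ (Fin d) → EuclideanSpace ℝ (Fin d)) (hfm : Measurable f)
    (hf : ∀ x y, ‖f x‖ ≤ ‖f y‖ + M * ‖x - y‖)
    (μ : Measure (EuclideanSpace ℝ (Fin d))) [IsProbabilityMeasure μ]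
    (htail : ∀ t : ℝ, 0 < t →
      (μ {x : EuclideanSpace ℝ (Fin d) | t < ‖x‖}).toReal
        ≤ Real.exp (-t ^ 2 / (2 * d ^ 2 * σ ^ 2)))
    (r : ℝ) (hr : 0 < r) (c : EuclideanSpace ℝ (Fin d)) :
    2 * ∫ x in {x : EuclideanSpace ℝ (Fin d) | r < ‖x‖}, (‖f x‖ ^ 2 + ‖c‖ ^ 2) ∂μ
      ≤ (4 * M ^ 2 * (2 * d ^ 2 * σ ^ 2 + r ^ 2) + 2 * (2 * ‖f 0‖ ^ 2 + ‖c‖ ^ 2))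
          * Real.exp (-r ^ 2 / (2 * d ^ 2 * σ ^ 2)) := by
  have hd' : (0 : ℝ) < d := by exact_mod_cast hd
  have hK : (0 : ℝ) < 2 * d ^ 2 * σ ^ 2 := by positivity
  set K : ℝ := 2 * d ^ 2 * σ ^ 2
  set e : ℝ := Real.exp (-r ^ 2 / K)
  let g : EuclideanSpace ℝ (Fin d) → ℝ := fun x => max (‖x‖ ^ 2 - r ^ 2) 0
  have hg0 : ∀ x, 0 ≤ g x := fun x => le_max_right _ _
  have hgm : Measurable g := by fun_prop
  have hlin := lintegral_excess_le μ (r := r) hK htail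
  have hgi : Integrable g μ :=
    ⟨hgm.aestronglyMeasurable,
      (hasFiniteIntegral_iff_ofReal (ae_of_all _ hg0)).2 (hlin.trans_lt ENNReal.ofReal_lt_top)⟩
  have hgint : ∫ x, g x ∂μ ≤ K * e := by
    rw [integral_eq_lintegral_of_nonneg_ae (ae_of_all _ hg0) hgm.aestronglyMeasurable]
    exact ENNReal.toReal_le_of_le_ofReal (by positivity) hlin
  set A : Set (EuclideanSpace ℝ (Fin d)) := {x | r < ‖x‖}
  have hA : MeasurableSet A := measurableSet_lt measurable_const measurable_norm
  have hgA : ∫ x in A, g x ∂μ ≤ K * e :=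
    (setIntegral_le_integral hgi (ae_of_all _ hg0)).trans hgint
  have hμA : μ.real A ≤ e := htail r hr
  set B : ℝ := 2 * ‖f 0‖ ^ 2 + ‖c‖ ^ 2 + 2 * M ^ 2 * r ^ 2
  have hB : 0 ≤ B := by positivity
  have hbound : ∀ x ∈ A, ‖f x‖ ^ 2 + ‖c‖ ^ 2 ≤ B + 2 * M ^ 2 * g x := by
    intro x _
    have h1 : ‖f x‖ ≤ ‖f 0‖ + M * ‖x‖ := by simpa using hf x 0
    have h2 : ‖f x‖ ^ 2 ≤ (‖f 0‖ + M * ‖x‖) ^ 2 := pow_le_pow_left₀ (norm_nonneg _) h1 2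
    have h3 : ‖x‖ ^ 2 ≤ r ^ 2 + g x := by
      have : ‖x‖ ^ 2 - r ^ 2 ≤ g x := le_max_left _ _
      linarith
    have h4 : M ^ 2 * ‖x‖ ^ 2 ≤ M ^ 2 * (r ^ 2 + g x) :=
      mul_le_mul_of_nonneg_left h3 (sq_nonneg M)
    simp only [B]
    nlinarith [sq_nonneg (‖f 0‖ - M * ‖x‖)]
  have hcg : Integrable (fun x => 2 * M ^ 2 * g x) (μ.restrict A) :=
    hgi.integrableOn.const_mul _
  have hmono : ∫ x in A, (‖f x‖ ^ 2 + ‖c‖ ^ 2) ∂μ ≤ ∫ x in A, (B + 2 * M ^ 2 * g x) ∂μ :=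
    integral_mono_of_nonneg (ae_of_all _ fun x => by positivity)
      ((integrable_const B).add hcg) ((ae_restrict_iff' hA).2 (ae_of_all _ hbound))
  rw [integral_add (integrable_const B) hcg, setIntegral_const, integral_const_mul,
    smul_eq_mul] at hmono
  have h5 : μ.real A * B ≤ e * B := mul_le_mul_of_nonneg_right hμA hB
  have h6 : 2 * M ^ 2 * ∫ x in A, g x ∂μ ≤ 2 * M ^ 2 * (K * e) :=
    mul_le_mul_of_nonneg_left hgA (by positivity)
  calc 2 * ∫ x in A, (‖f x‖ ^ 2 + ‖c‖ ^ 2) ∂μ ≤ 2 * (e * B + 2 * M ^ 2 * (K * e)) := by linarith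
    _ = _ := by simp only [B]; ring
end

section
/- Assume V : ℝ^d → ℝ is continuously differentiable, ∇V is M-Lipschitz, V is m-strongly convex with 0 < m ≤ M < √2·m, and ∇V(0) = 0 (the unique minimizer of V is 0). Then for every x ∈ ℝ^d, ‖∇V(x) − m·x‖ ≤ √(M² − m²)·‖x‖; moreover √(M² − m²) < m, so in particular ‖∇V(x) − m·x‖ < m·‖x‖ for every x ≠ 0. -/
/-! Adding the strong convexity inequalities for the pairs `(x, 0)` and `(0, x)`, with `∇V(0) = 0`,
gives `m‖x‖² ≤ ⟪∇V(x), x⟫`, while the Lipschitz bound gives `‖∇V(x)‖ ≤ M‖x‖`. Expanding the square,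
`‖∇V(x) − m·x‖² = ‖∇V(x)‖² − 2m⟪∇V(x), x⟫ + m²‖x‖² ≤ (M² − m²)‖x‖²`.
Finally `M < √2·m` means `M² − m² < m²`. -/

open Real
open scoped RealInnerProductSpace

/-- **linear approximation of the potential gradient.** If `V : ℝ^d → ℝ`
is continuously differentiable, `∇V` is `M`-Lipschitz, `V` is `m`-strongly convex with
`0 < m ≤ M < √2·m`, and `∇V(0) = 0`, then `‖∇V(x) − m·x‖ ≤ √(M² − m²)·‖x‖` for every
`x`; moreover `√(M² − m²) < m`, so `‖∇V(x) − m·x‖ < m·‖x‖` for every `x ≠ 0`. -/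
theorem gradient_linear_approx
    (d : ℕ)
    (V : EuclideanSpace ℝ (Fin d) → ℝ) (gV : EuclideanSpace ℝ (Fin d) → EuclideanSpace ℝ (Fin d))
    (m M : ℝ) (hm : 0 < m) (hmM : m ≤ M) (hM2 : M < Real.sqrt 2 * m)
    (hgrad : ∀ x, HasGradientAt V (gV x) x)
    (hLip : ∀ x y, ‖gV x - gV y‖ ≤ M * ‖x - y‖)
    (hconv : ∀ x y, m / 2 * ‖x - y‖ ^ 2 ≤ V x - V y - ⟪gV y, x - y⟫)
    (hmin : gV 0 = 0) :
    (∀ x : EuclideanSpace ℝ (Fin d), ‖gV x - m • x‖ ≤ Real.sqrt (M ^ 2 - m ^ 2) * ‖x‖)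
    ∧ Real.sqrt (M ^ 2 - m ^ 2) < m
    ∧ ∀ x : EuclideanSpace ℝ (Fin d), x ≠ 0 → ‖gV x - m • x‖ < m * ‖x‖ := by
  have hsqrt : Real.sqrt (M ^ 2 - m ^ 2) < m := by
    rw [Real.sqrt_lt' hm]
    have h2 : Real.sqrt 2 ^ 2 = 2 := Real.sq_sqrt (by norm_num)
    have h : M ^ 2 < (Real.sqrt 2 * m) ^ 2 := pow_lt_pow_left₀ hM2 (hm.le.trans hmM) two_ne_zero
    rw [mul_pow, h2] at h
    linarith
  have hbound : ∀ x : EuclideanSpace ℝ (Fin d),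
      ‖gV x - m • x‖ ≤ Real.sqrt (M ^ 2 - m ^ 2) * ‖x‖ := by
    intro x
    have hM : ‖gV x‖ ≤ M * ‖x‖ := by simpa [hmin] using hLip x 0
    have hmono : m * ‖x‖ ^ 2 ≤ ⟪gV x, x⟫ := by
      have h1 := hconv x 0
      have h2 := hconv 0 x
      simp only [hmin, sub_zero, zero_sub, norm_neg, inner_zero_left, inner_neg_right] at h1 h2
      linarith
    have hnn : 0 ≤ M ^ 2 - m ^ 2 := sub_nonneg.2 (pow_le_pow_left₀ hm.le hmM 2)
    refine (sq_le_sq₀ (norm_nonneg _) (by positivity)).1 ?_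
    rw [mul_pow, Real.sq_sqrt hnn, norm_sub_sq_real, inner_smul_right, norm_smul,
      Real.norm_of_nonneg hm.le, mul_pow]
    have hM' : ‖gV x‖ ^ 2 ≤ (M * ‖x‖) ^ 2 := pow_le_pow_left₀ (norm_nonneg _) hM 2
    rw [mul_pow] at hM'
    have hmono' := mul_le_mul_of_nonneg_left hmono hm.le
    linarith
  exact ⟨hbound, hsqrt, fun x hx =>
    (hbound x).trans_lt (mul_lt_mul_of_pos_right hsqrt (norm_pos_iff.2 hx))⟩
end

section
/- Let d ≥ 1, σ > 0, ε > 0, r > 0, G ≥ 0, and let μ be a probability measure on ℝ^d with μ({x : ‖x‖ > t}) ≤ exp(−t²/(2d²σ²)) for all t > 0. Let w : ℝ^d → ℝ^d be measurable and suppose ‖w(x)‖ ≤ ε/√2 whenever ‖x‖ ≤ r, and ‖w(x)‖ ≤ 9ε/√(2d) + G‖x‖ for all x ∈ ℝ^d. Then ∫_{ℝ^d} ‖w(x)‖² dμ(x) ≤ ε²/2 + (81ε²/d + 2G²(2d²σ² + r²))·exp(−r²/(2d²σ²)). -/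
/-!
Write `c = 2d²σ²` and let `A = {‖x‖ > r}`. On the ball the local bound gives `‖w‖² ≤ ε²/2`; on `A`
the global bound and `(a + b)² ≤ 2a² + 2b²` give `‖w‖² ≤ 81ε²/d + 2G²‖x‖²`. Splitting
`‖x‖² = r² + (‖x‖² - r²)` on `A`, both cases are covered by the single pointwise bound
`‖w‖² ≤ ε²/2 + (81ε²/d + 2G²r²) 1_A + 2G² (‖x‖² - r²)⁺`.
The tail hypothesis at `t = r` controls `μ A`, and the layer-cake formula turns the tail hypothesis at
`t = √(r² + s)` into `∫ (‖x‖² - r²)⁺ dμ ≤ ∫₀^∞ exp(-(r² + s)/c) ds = c exp(-r²/c)`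
(`integral_sq_excess_le`).
-/

open MeasureTheory Real

/-- Layer-cake bound on the excess of `‖x‖²` over `r²` under a sub-Gaussian norm tail.
Integrability is part of the conclusion, so that the integral is not a junk value. -/
lemma integral_sq_excess_le {E : Type*} [NormedAddCommGroup E] [MeasurableSpace E]
    [OpensMeasurableSpace E] (μ : Measure E) [IsFiniteMeasure μ] {c r : ℝ} (hc : 0 < c) (hr : 0 < r)
    (htail : ∀ t : ℝ, 0 < t → (μ {x : E | t < ‖x‖}).toReal ≤ Real.exp (-t ^ 2 / c)) :
    Integrable (fun x : E => max (‖x‖ ^ 2 - r ^ 2) 0) μ ∧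
      ∫ x, max (‖x‖ ^ 2 - r ^ 2) 0 ∂μ ≤ c * Real.exp (-r ^ 2 / c) := by
  have hmeas : Measurable (fun x : E => max (‖x‖ ^ 2 - r ^ 2) 0) := by fun_prop
  have hnn : 0 ≤ᵐ[μ] (fun x : E => max (‖x‖ ^ 2 - r ^ 2) 0) :=
    Filter.Eventually.of_forall fun x => le_max_right _ _
  have hfun : ∀ s : ℝ, Real.exp (-(r ^ 2 + s) / c) =
      Real.exp (-r ^ 2 / c) * Real.exp (-(1 / c) * s) := by
    intro s
    rw [← Real.exp_add]
    congr 1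
    ring
  have hint : IntegrableOn (fun s : ℝ => Real.exp (-(r ^ 2 + s) / c)) (Set.Ioi 0) := by
    simp only [hfun]
    exact (exp_neg_integrableOn_Ioi 0 (by positivity)).const_mul _
  have hval : ∫ s in Set.Ioi (0 : ℝ), Real.exp (-(r ^ 2 + s) / c) =
      c * Real.exp (-r ^ 2 / c) := by
    simp only [hfun]
    rw [integral_const_mul, integral_exp_mul_Ioi (by simpa using hc) 0]
    simp
    ring
  have hl : ∫⁻ x, ENNReal.ofReal (max (‖x‖ ^ 2 - r ^ 2) 0) ∂μ
      ≤ ENNReal.ofReal (c * Real.exp (-r ^ 2 / c)) := by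
    rw [lintegral_eq_lintegral_meas_lt μ hnn hmeas.aemeasurable, ← hval,
      ofReal_integral_eq_lintegral_ofReal hint
        (Filter.Eventually.of_forall fun s => (Real.exp_pos _).le)]
    refine setLIntegral_mono' measurableSet_Ioi fun s hs => ?_
    have hs : 0 < s := hs
    have hpos : 0 < r ^ 2 + s := by positivity
    have hsub : {x : E | s < max (‖x‖ ^ 2 - r ^ 2) 0} ⊆ {x : E | √(r ^ 2 + s) < ‖x‖} := by
      intro x hx
      rcases lt_max_iff.1 (show s < max (‖x‖ ^ 2 - r ^ 2) 0 from hx) with h | h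
      · exact (Real.sqrt_lt hpos.le (norm_nonneg x)).2 (by linarith)
      · linarith
    refine (measure_mono hsub).trans ?_
    rw [ENNReal.le_ofReal_iff_toReal_le (measure_ne_top _ _) (Real.exp_pos _).le]
    have h := htail _ (Real.sqrt_pos.2 hpos)
    rwa [Real.sq_sqrt hpos.le] at h
  refine ⟨⟨hmeas.aestronglyMeasurable, ?_⟩, ?_⟩
  · rw [hasFiniteIntegral_iff_ofReal hnn]
    exact hl.trans_lt ENNReal.ofReal_lt_top
  · rw [integral_eq_lintegral_of_nonneg_ae hnn hmeas.aestronglyMeasurable]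
    exact ENNReal.toReal_le_of_le_ofReal (by positivity) hl

/-- **global `L²(μ)` error of a locally accurate drift approximation.**
Let `μ` be a probability measure on `ℝ^d` with sub-Gaussian norm tail
`μ({‖x‖ > t}) ≤ exp(−t²/(2d²σ²))` for all `t > 0`, and let `w : ℝ^d → ℝ^d` be measurable
with `‖w(x)‖ ≤ ε/√2` on the ball `‖x‖ ≤ r` and `‖w(x)‖ ≤ 9ε/√(2d) + G‖x‖` globally.
Then `∫ ‖w‖² dμ ≤ ε²/2 + (81ε²/d + 2G²(2d²σ² + r²))·exp(−r²/(2d²σ²))`. -/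
theorem global_L2_error_of_local_accuracy
    (d : ℕ) (hd : 1 ≤ d) (σ ε r G : ℝ) (hσ : 0 < σ) (hε : 0 < ε) (hr : 0 < r) (hG : 0 ≤ G)
    (μ : Measure (EuclideanSpace ℝ (Fin d))) [IsProbabilityMeasure μ]
    (htail : ∀ t : ℝ, 0 < t →
      (μ {x : EuclideanSpace ℝ (Fin d) | t < ‖x‖}).toReal
        ≤ Real.exp (-t ^ 2 / (2 * d ^ 2 * σ ^ 2)))
    (w : EuclideanSpace ℝ (Fin d) → EuclideanSpace ℝ (Fin d)) (hw : Measurable w)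
    (hwball : ∀ x : EuclideanSpace ℝ (Fin d), ‖x‖ ≤ r → ‖w x‖ ≤ ε / Real.sqrt 2)
    (hwglobal : ∀ x : EuclideanSpace ℝ (Fin d),
      ‖w x‖ ≤ 9 * ε / Real.sqrt (2 * d) + G * ‖x‖) :
    ∫ x, ‖w x‖ ^ 2 ∂μ
      ≤ ε ^ 2 / 2
        + (81 * ε ^ 2 / d + 2 * G ^ 2 * (2 * d ^ 2 * σ ^ 2 + r ^ 2))
            * Real.exp (-r ^ 2 / (2 * d ^ 2 * σ ^ 2)) := by
  have hd0 : (0 : ℝ) < d := by exact_mod_cast hd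
  have hc : (0 : ℝ) < 2 * d ^ 2 * σ ^ 2 := by positivity
  obtain ⟨hI, hle⟩ := integral_sq_excess_le μ hc hr htail
  set A : Set (EuclideanSpace ℝ (Fin d)) := {x | r < ‖x‖} with hA
  have hAm : MeasurableSet A := measurableSet_lt measurable_const measurable_norm
  have hμA : μ.real A ≤ Real.exp (-r ^ 2 / (2 * d ^ 2 * σ ^ 2)) := htail r hr
  set K : ℝ := 81 * ε ^ 2 / d + 2 * G ^ 2 * r ^ 2 with hK
  have hK0 : 0 ≤ K := by positivity
  have hind : Integrable (A.indicator fun _ => K) μ := (integrable_const K).indicator hAm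
  have hpt : ∀ x, ‖w x‖ ^ 2 ≤ ε ^ 2 / 2 + A.indicator (fun _ => K) x
      + 2 * G ^ 2 * max (‖x‖ ^ 2 - r ^ 2) 0 := by
    intro x
    by_cases hx : r < ‖x‖
    · have h1 : A.indicator (fun _ => K) x = K := Set.indicator_of_mem (show x ∈ A from hx) _
      have h2 : max (‖x‖ ^ 2 - r ^ 2) 0 = ‖x‖ ^ 2 - r ^ 2 :=
        max_eq_left (by nlinarith)
      have h3 : ‖w x‖ ^ 2 ≤ (9 * ε / √(2 * d) + G * ‖x‖) ^ 2 :=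
        pow_le_pow_left₀ (norm_nonneg _) (hwglobal x) 2
      have h4 : (9 * ε / √(2 * d)) ^ 2 = 81 * ε ^ 2 / d / 2 := by
        rw [div_pow, Real.sq_sqrt (by positivity)]
        field_simp
        norm_num
      rw [h1, h2, hK]
      nlinarith [sq_nonneg (9 * ε / √(2 * d) - G * ‖x‖), sq_nonneg ε]
    · have h1 : A.indicator (fun _ => K) x = 0 := Set.indicator_of_notMem (show x ∉ A from hx) _
      have h3 : ‖w x‖ ^ 2 ≤ (ε / √2) ^ 2 :=
        pow_le_pow_left₀ (norm_nonneg _) (hwball x (not_lt.1 hx)) 2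
      rw [div_pow, Real.sq_sqrt (by norm_num)] at h3
      have h4 : 0 ≤ 2 * G ^ 2 * max (‖x‖ ^ 2 - r ^ 2) 0 := by positivity
      rw [h1]
      linarith
  have hsum : Integrable (fun x => ε ^ 2 / 2 + A.indicator (fun _ => K) x) μ :=
    (integrable_const _).add hind
  calc ∫ x, ‖w x‖ ^ 2 ∂μ
      ≤ ∫ x, (ε ^ 2 / 2 + A.indicator (fun _ => K) x
          + 2 * G ^ 2 * max (‖x‖ ^ 2 - r ^ 2) 0) ∂μ :=
        integral_mono_of_nonneg (Filter.Eventually.of_forall fun x => sq_nonneg _)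
          (hsum.add (hI.const_mul _))
          (Filter.Eventually.of_forall hpt)
    _ = ε ^ 2 / 2 + μ.real A * K + 2 * G ^ 2 * ∫ x, max (‖x‖ ^ 2 - r ^ 2) 0 ∂μ := by
        rw [integral_add hsum (hI.const_mul _),
          integral_add (integrable_const _) hind, integral_const_mul,
          integral_indicator_const K hAm]
        simp
    _ ≤ ε ^ 2 / 2 + Real.exp (-r ^ 2 / (2 * d ^ 2 * σ ^ 2)) * K
          + 2 * G ^ 2 * (2 * d ^ 2 * σ ^ 2 * Real.exp (-r ^ 2 / (2 * d ^ 2 * σ ^ 2))) := by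
        gcongr
    _ = _ := by
        rw [hK]
        ring
end
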